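/- arXiv:2604.03510 — 7 statements merged into one kernel-verified Lean document; each statement's English description precedes it below -/
import Mathlib

section
/- Let φ : ℝ² → ℝ be convex, positively 1-homogeneous, and differentiable at every nonzero point. Then for every unit vector ν ∈ S¹, the point ∇φ(ν) belongs to the topological frontier of the Wulff shape W_φ; i.e. ∇φ(S¹) ⊆ ∂W_φ. -/
open scoped RealInnerProductSpace

/-- The Wulff shape of an anisotropic density `φ` on `ℝ²`:
`W_φ = {x : ⟪x, y⟫ ≤ φ(y) for all unit vectors y}`. -/
def WulffShape (φ : EuclideanSpace ℝ (Fin 2) → ℝ) : Set (EuclideanSpace ℝ (Fin 2)) :=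
  {x | ∀ y : EuclideanSpace ℝ (Fin 2), ‖y‖ = 1 → ⟪x, y⟫ ≤ φ y}

/-- If `φ : ℝ² → ℝ` is convex, positively 1-homogeneous and differentiable away from `0`,
then the gradient of `φ` at any unit vector lies on the frontier of the Wulff shape:
`∇φ(S¹) ⊆ ∂W_φ`. -/
theorem gradient_mem_frontier_wulffShape
    (φ : EuclideanSpace ℝ (Fin 2) → ℝ)
    (hconv : ConvexOn ℝ Set.univ φ)
    (hhom : ∀ c : ℝ, 0 < c → ∀ x : EuclideanSpace ℝ (Fin 2), φ (c • x) = c * φ x)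
    (hdiff : ∀ x : EuclideanSpace ℝ (Fin 2), x ≠ 0 → DifferentiableAt ℝ φ x) :
    ∀ ν : EuclideanSpace ℝ (Fin 2), ‖ν‖ = 1 →
      gradient φ ν ∈ frontier (WulffShape φ) := by
  intro ν hν
  have hν0 : ν ≠ 0 := by
    intro h
    simp [h] at hν
  have hsub : ∀ a b : EuclideanSpace ℝ (Fin 2), φ (a + b) ≤ φ a + φ b := by
    intro a b
    have h := hconv.2 (Set.mem_univ a) (Set.mem_univ b)
      (show (0 : ℝ) ≤ 1 / 2 by norm_num) (show (0 : ℝ) ≤ 1 / 2 by norm_num) (by norm_num)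
    rw [← smul_add, hhom _ (by norm_num)] at h
    simp only [smul_eq_mul] at h
    linarith
  have hg : HasFDerivAt φ (InnerProductSpace.toDual ℝ _ (gradient φ ν)) ν :=
    (hdiff ν hν0).hasGradientAt.hasFDerivAt
  have hk : ∀ y : EuclideanSpace ℝ (Fin 2),
      HasDerivAt (fun t : ℝ => φ (ν + t • y)) ⟪gradient φ ν, y⟫ 0 := by
    intro y
    have h1 : HasDerivAt (fun t : ℝ => ν + t • y) y 0 := by
      simpa using ((hasDerivAt_id (0 : ℝ)).smul_const y).const_add ν
    have h2 : HasFDerivAt φ (InnerProductSpace.toDual ℝ _ (gradient φ ν))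
        (ν + (0 : ℝ) • y) := by simpa using hg
    have h3 := h2.comp_hasDerivAt (0 : ℝ) h1
    rw [InnerProductSpace.toDual_apply_apply] at h3
    exact h3
  have hmem : gradient φ ν ∈ WulffShape φ := by
    intro y _
    refine le_of_tendsto (hk y).tendsto_slope_zero_right ?_
    filter_upwards [self_mem_nhdsWithin] with t ht
    have ht : 0 < t := ht
    have h := hsub ν (t • y)
    rw [hhom t ht] at h
    simp only [zero_add, zero_smul, add_zero, smul_eq_mul]
    rw [inv_mul_le_iff₀ ht]
    linarith
  have heq : φ ν ≤ ⟪gradient φ ν, ν⟫ := by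
    refine ge_of_tendsto (hk ν).tendsto_slope_zero_right ?_
    filter_upwards [self_mem_nhdsWithin] with t ht
    have ht : 0 < t := ht
    have h : φ (ν + t • ν) = (1 + t) * φ ν := by
      rw [← hhom _ (by linarith), add_smul, one_smul]
    simp only [zero_add, zero_smul, add_zero, smul_eq_mul]
    rw [h, le_inv_mul_iff₀ ht]
    linarith
  refine ⟨subset_closure hmem, fun hint => ?_⟩
  have hc : Filter.Tendsto (fun t : ℝ => gradient φ ν + t • ν) (nhdsWithin 0 (Set.Ioi 0))
      (nhds (gradient φ ν)) := by
    have : Continuous (fun t : ℝ => gradient φ ν + t • ν) := by fun_prop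
    have h := this.tendsto 0
    simp only [zero_smul, add_zero] at h
    exact h.mono_left nhdsWithin_le_nhds
  have hev := hc.eventually (mem_interior_iff_mem_nhds.mp hint)
  obtain ⟨t, ht, ht0⟩ := (hev.and self_mem_nhdsWithin).exists
  have ht0 : 0 < t := ht0
  have h := ht ν hν
  rw [inner_add_left, real_inner_smul_left, real_inner_self_eq_norm_sq, hν] at h
  linarith
end

section
/- Let φ : ℝ² → ℝ be continuous, convex, positively 1-homogeneous, positive on S¹, and differentiable at every nonzero point. Then for every x in the topological frontier ∂W_φ of the Wulff shape there exists a unit vector ν ∈ S¹ such that ∇φ(ν) = x; i.e. ∂W_φ ⊆ ∇φ(S¹). -/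
open scoped RealInnerProductSpace

/-- If `φ : ℝ² → ℝ` is continuous, convex, positively 1-homogeneous, positive on the unit
sphere and differentiable away from `0`, then every point of the frontier of the Wulff shape
is the gradient of `φ` at some unit vector: `∂W_φ ⊆ ∇φ(S¹)`. -/
theorem frontier_wulffShape_subset_gradient_image
    (φ : EuclideanSpace ℝ (Fin 2) → ℝ)
    (hcont : Continuous φ)
    (hconv : ConvexOn ℝ Set.univ φ)
    (hhom : ∀ c : ℝ, 0 < c → ∀ x : EuclideanSpace ℝ (Fin 2), φ (c • x) = c * φ x)
    (hpos : ∀ y : EuclideanSpace ℝ (Fin 2), ‖y‖ = 1 → 0 < φ y)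
    (hdiff : ∀ x : EuclideanSpace ℝ (Fin 2), x ≠ 0 → DifferentiableAt ℝ φ x) :
    ∀ x ∈ frontier (WulffShape φ),
      ∃ ν : EuclideanSpace ℝ (Fin 2), ‖ν‖ = 1 ∧ gradient φ ν = x := by
  intro x hx
  have hclosed : IsClosed (WulffShape φ) := by
    have : WulffShape φ = ⋂ y : EuclideanSpace ℝ (Fin 2), ⋂ _ : ‖y‖ = 1, {x | ⟪x, y⟫ ≤ φ y} := by
      ext z; simp [WulffShape]
    rw [this]
    refine isClosed_iInter fun y => isClosed_iInter fun _ => ?_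
    exact isClosed_le (by fun_prop) continuous_const
  have hxW : x ∈ WulffShape φ := hclosed.frontier_subset hx
  have hxI : x ∉ interior (WulffShape φ) := hx.2
  have hgc : Continuous (fun y : EuclideanSpace ℝ (Fin 2) => φ y - ⟪x, y⟫) := by fun_prop
  obtain ⟨ν, hν, hmin⟩ := (isCompact_sphere (0 : EuclideanSpace ℝ (Fin 2)) 1).exists_isMinOn
    (NormedSpace.sphere_nonempty.mpr zero_le_one) hgc.continuousOn
  have hν1 : ‖ν‖ = 1 := by simpa using hν
  have hm0 : φ ν - ⟪x, ν⟫ = 0 := by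
    by_contra hne
    have h0 := hxW ν hν1
    have hm : 0 < φ ν - ⟪x, ν⟫ := lt_of_le_of_ne (by linarith) (Ne.symm hne)
    apply hxI
    rw [mem_interior_iff_mem_nhds, Metric.mem_nhds_iff]
    refine ⟨_, hm, fun z hz y hy => ?_⟩
    have h1 : φ ν - ⟪x, ν⟫ ≤ φ y - ⟪x, y⟫ := hmin (by simpa using hy)
    have h2 : ⟪z - x, y⟫ ≤ ‖z - x‖ * ‖y‖ := real_inner_le_norm _ _
    rw [inner_sub_left, hy] at h2
    rw [Metric.mem_ball, dist_eq_norm] at hz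
    linarith
  have hnn : ∀ y, 0 ≤ φ y - ⟪x, y⟫ := by
    intro y
    rcases eq_or_ne y 0 with rfl | hy
    · have := hhom 2 (by norm_num) 0
      rw [smul_zero] at this
      rw [inner_zero_right]
      linarith
    · have hn : 0 < ‖y‖ := norm_pos_iff.mpr hy
      have h1 := hxW (‖y‖⁻¹ • y) (by rw [norm_smul, norm_inv, norm_norm]; field_simp)
      rw [hhom _ (inv_pos.mpr hn), inner_smul_right] at h1
      have := le_of_mul_le_mul_left h1 (inv_pos.mpr hn)
      linarith
  have hν0 : ν ≠ 0 := by
    rintro rfl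
    simp at hν1
  refine ⟨ν, hν1, ?_⟩
  have hl : IsLocalMin (fun y : EuclideanSpace ℝ (Fin 2) => φ y - ⟪x, y⟫) ν :=
    Filter.Eventually.of_forall fun y => by
      show φ ν - ⟪x, ν⟫ ≤ φ y - ⟪x, y⟫
      rw [hm0]; exact hnn y
  have hd := ((hdiff ν hν0).hasFDerivAt).sub (innerSL ℝ x).hasFDerivAt
  have h0 := hl.hasFDerivAt_eq_zero hd
  have h1 : fderiv ℝ φ ν = innerSL ℝ x := sub_eq_zero.mp h0
  rw [gradient, h1]
  exact (InnerProductSpace.toDual ℝ _).symm_apply_apply x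
end

section
/- Let φ : ℝ² → ℝ be convex, positively 1-homogeneous, positive on nonzero vectors, differentiable at every nonzero point, and assume the sublevel set {x ∈ ℝ² : φ(x) ≤ 1} is strictly convex. Then the gradient map ν ↦ ∇φ(ν) is injective on the unit sphere S¹. -/
open scoped RealInnerProductSpace

/-- If `φ : ℝ² → ℝ` is convex, positively 1-homogeneous, positive on nonzero vectors,
differentiable away from `0`, and its unit sublevel set `{φ ≤ 1}` is strictly convex,
then the gradient map `ν ↦ ∇φ(ν)` is injective on the unit sphere. -/
theorem gradient_injOn_sphere
    (φ : EuclideanSpace ℝ (Fin 2) → ℝ)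
    (hconv : ConvexOn ℝ Set.univ φ)
    (hhom : ∀ c : ℝ, 0 < c → ∀ x : EuclideanSpace ℝ (Fin 2), φ (c • x) = c * φ x)
    (hpos : ∀ x : EuclideanSpace ℝ (Fin 2), x ≠ 0 → 0 < φ x)
    (hdiff : ∀ x : EuclideanSpace ℝ (Fin 2), x ≠ 0 → DifferentiableAt ℝ φ x)
    (hstrict : StrictConvex ℝ {x : EuclideanSpace ℝ (Fin 2) | φ x ≤ 1}) :
    Set.InjOn (gradient φ) {ν : EuclideanSpace ℝ (Fin 2) | ‖ν‖ = 1} := by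
  have hline : ∀ a : EuclideanSpace ℝ (Fin 2), a ≠ 0 → ∀ d : EuclideanSpace ℝ (Fin 2),
      HasDerivAt (fun t : ℝ => φ (a + t • d)) ⟪gradient φ a, d⟫ 0 := by
    intro a ha d
    have h1 := (hdiff a ha).hasGradientAt.hasFDerivAt
    have h2 : HasDerivAt (fun t : ℝ => a + t • d) d 0 := by
      simpa using ((hasDerivAt_id (0:ℝ)).smul_const d).const_add a
    have h1' : HasFDerivAt φ (InnerProductSpace.toDual ℝ _ (gradient φ a)) (a + (0:ℝ) • d) := by
      simpa using h1
    have h3 := h1'.comp_hasDerivAt (0:ℝ) h2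
    simpa [Function.comp_def] using h3
  have heuler : ∀ a : EuclideanSpace ℝ (Fin 2), a ≠ 0 → ⟪gradient φ a, a⟫ = φ a := by
    intro a ha
    refine (hline a ha a).unique ?_
    have h : HasDerivAt (fun t : ℝ => (1 + t) * φ a) (φ a) 0 := by
      simpa using ((hasDerivAt_id (0:ℝ)).const_add 1).mul_const (φ a)
    refine h.congr_of_eventuallyEq ?_
    filter_upwards [lt_mem_nhds (show (-1:ℝ) < 0 by norm_num)] with t ht
    rw [← hhom (1 + t) (by linarith) a, add_smul, one_smul]
  have hsub : ∀ a : EuclideanSpace ℝ (Fin 2), a ≠ 0 → ∀ y, ⟪gradient φ a, y⟫ ≤ φ y := by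
    intro a ha y
    have hc : ConvexOn ℝ Set.univ (fun t : ℝ => φ (a + t • (y - a))) := by
      have := hconv.comp_affineMap (AffineMap.lineMap a y : ℝ →ᵃ[ℝ] EuclideanSpace ℝ (Fin 2))
      simpa [Function.comp_def, AffineMap.lineMap_apply, add_comm] using this
    have h := hc.le_slope_of_hasDerivAt (Set.mem_univ 0) (Set.mem_univ 1) zero_lt_one
      (hline a ha (y - a))
    rw [inner_sub_right, heuler a ha, slope_def_field] at h
    simp only [one_smul, zero_smul, add_zero, add_sub_cancel, sub_zero, div_one] at h
    linarith
  intro a ha b hb hab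
  simp only [Set.mem_setOf_eq] at ha hb
  have ha0 : a ≠ 0 := by rintro rfl; simp at ha
  have hb0 : b ≠ 0 := by rintro rfl; simp at hb
  have pa := hpos a ha0
  have pb := hpos b hb0
  by_contra hne
  have hne' : (φ a)⁻¹ • a ≠ (φ b)⁻¹ • b := by
    intro h
    have hn := congrArg norm h
    rw [norm_smul, norm_smul, ha, hb, Real.norm_of_nonneg (by positivity),
      Real.norm_of_nonneg (by positivity), mul_one, mul_one] at hn
    rw [hn] at h
    exact hne (smul_right_injective _ (inv_ne_zero pb.ne') h)
  have hm := hstrict (x := (φ a)⁻¹ • a) (y := (φ b)⁻¹ • b)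
    (by simp [hhom _ (inv_pos.2 pa), pa.ne'])
    (by simp [hhom _ (inv_pos.2 pb), pb.ne']) hne'
    (show (0:ℝ) < 1/2 by norm_num) (show (0:ℝ) < 1/2 by norm_num) (by norm_num)
  set m := (1/2 : ℝ) • (φ a)⁻¹ • a + (1/2 : ℝ) • (φ b)⁻¹ • b with hmdef
  have hgm : ⟪gradient φ a, m⟫ = 1 := by
    have hb' : ⟪gradient φ a, b⟫ = φ b := by rw [hab]; exact heuler b hb0
    rw [hmdef, inner_add_right, real_inner_smul_right, real_inner_smul_right,
      real_inner_smul_right, real_inner_smul_right, heuler a ha0, hb']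
    field_simp
    norm_num
  have hcont : Filter.Tendsto (fun t : ℝ => t • m) (nhds 1) (nhds m) := by
    have : Continuous (fun t : ℝ => t • m) := by fun_prop
    simpa using this.tendsto 1
  have hev := hcont.eventually (mem_interior_iff_mem_nhds.1 hm)
  obtain ⟨t, ht, ht1⟩ := ((hev.filter_mono nhdsWithin_le_nhds).and
    (self_mem_nhdsWithin : Set.Ioi (1:ℝ) ∈ nhdsWithin 1 (Set.Ioi 1))).exists
  have h1 := hsub a ha0 (t • m)
  rw [real_inner_smul_right, hgm] at h1
  have h2 : φ (t • m) ≤ 1 := ht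
  have h3 : 1 < t := ht1
  linarith
end

section
/- Let φ : ℝ² → ℝ be convex, positively 1-homogeneous, positive on nonzero vectors, continuously differentiable on ℝ² \ {0}, and assume the sublevel set {x ∈ ℝ² : φ(x) ≤ 1} is strictly convex. Then the restriction of the gradient map F(ν) = ∇φ(ν) to the unit sphere S¹ is a continuous bijection from S¹ onto the topological frontier ∂W_φ of the Wulff shape; in particular (S¹ being compact) it is a homeomorphism of S¹ onto ∂W_φ. -/
open scoped RealInnerProductSpace

local notation "E2" => EuclideanSpace ℝ (Fin 2)

lemma wulff_aux_diff (φ : E2 → ℝ) (hC1 : ContDiffOn ℝ 1 φ {x : E2 | x ≠ 0}) {ν : E2} (hν : ν ≠ 0) :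
    HasFDerivAt φ (InnerProductSpace.toDual ℝ E2 (gradient φ ν)) ν := by
  have h : DifferentiableAt ℝ φ ν :=
    (hC1.differentiableOn one_ne_zero).differentiableAt (isOpen_ne.mem_nhds hν)
  exact h.hasGradientAt

lemma wulff_aux_line (φ : E2 → ℝ) (hC1 : ContDiffOn ℝ 1 φ {x : E2 | x ≠ 0}) {ν : E2} (hν : ν ≠ 0)
    (y : E2) : HasDerivAt (fun t : ℝ => φ (ν + t • y)) ⟪gradient φ ν, y⟫ 0 := by
  have h := wulff_aux_diff φ hC1 hν
  have h2 : HasDerivAt (fun t : ℝ => ν + t • y) y 0 := by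
    simpa using ((hasDerivAt_id (0 : ℝ)).smul_const y).const_add ν
  have h3 : HasFDerivAt φ (InnerProductSpace.toDual ℝ E2 (gradient φ ν)) (ν + (0 : ℝ) • y) := by
    simpa using h
  exact h3.comp_hasDerivAt 0 h2

lemma wulff_aux_euler (φ : E2 → ℝ) (hC1 : ContDiffOn ℝ 1 φ {x : E2 | x ≠ 0})
    (hhom : ∀ c : ℝ, 0 < c → ∀ x : E2, φ (c • x) = c * φ x) {ν : E2} (hν : ν ≠ 0) :
    ⟪gradient φ ν, ν⟫ = φ ν := by
  have h := wulff_aux_line φ hC1 hν ν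
  have h2 : HasDerivAt (fun t : ℝ => (1 + t) * φ ν) (φ ν) 0 := by
    simpa using ((hasDerivAt_id (0 : ℝ)).const_add 1).mul_const (φ ν)
  refine h.unique (h2.congr_of_eventuallyEq ?_)
  filter_upwards [lt_mem_nhds (show (-1 : ℝ) < 0 by norm_num)] with t ht
  rw [← hhom (1 + t) (by linarith) ν, add_smul, one_smul]

lemma wulff_aux_zero (φ : E2 → ℝ)
    (hhom : ∀ c : ℝ, 0 < c → ∀ x : E2, φ (c • x) = c * φ x) : φ 0 = 0 := by
  have := hhom 2 (by norm_num) 0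
  rw [smul_zero] at this
  linarith

lemma wulff_aux_subadd (φ : E2 → ℝ) (hconv : ConvexOn ℝ Set.univ φ)
    (hhom : ∀ c : ℝ, 0 < c → ∀ x : E2, φ (c • x) = c * φ x) (x y : E2) :
    φ (x + y) ≤ φ x + φ y := by
  have h := hconv.2 (Set.mem_univ x) (Set.mem_univ y) (show (0 : ℝ) ≤ 1 / 2 by norm_num)
    (show (0 : ℝ) ≤ 1 / 2 by norm_num) (by norm_num)
  rw [← smul_add, hhom _ (by norm_num)] at h
  simp only [smul_eq_mul] at h
  linarith

lemma wulff_aux_le (φ : E2 → ℝ) (hconv : ConvexOn ℝ Set.univ φ)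
    (hC1 : ContDiffOn ℝ 1 φ {x : E2 | x ≠ 0})
    (hhom : ∀ c : ℝ, 0 < c → ∀ x : E2, φ (c • x) = c * φ x) {ν : E2} (hν : ν ≠ 0) (y : E2) :
    ⟪gradient φ ν, y⟫ ≤ φ y := by
  have h := (wulff_aux_line φ hC1 hν y).tendsto_slope_zero_right
  refine le_of_tendsto h ?_
  filter_upwards [self_mem_nhdsWithin] with t ht
  have ht : 0 < t := ht
  have h1 := wulff_aux_subadd φ hconv hhom ν (t • y)
  rw [hhom t ht] at h1
  simp only [zero_add, zero_smul, add_zero, smul_eq_mul]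
  rw [inv_mul_le_iff₀ ht]
  linarith

lemma wulff_aux_mem (φ : E2 → ℝ)
    (hhom : ∀ c : ℝ, 0 < c → ∀ x : E2, φ (c • x) = c * φ x) {x : E2}
    (hx : x ∈ WulffShape φ) (y : E2) : ⟪x, y⟫ ≤ φ y := by
  by_cases hy : y = 0
  · simp [hy, wulff_aux_zero φ hhom]
  have hn : 0 < ‖y‖ := norm_pos_iff.2 hy
  have h := hx (‖y‖⁻¹ • y) (by rw [norm_smul, norm_inv, norm_norm, inv_mul_cancel₀ hn.ne'])
  rw [hhom _ (inv_pos.2 hn), real_inner_smul_right] at h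
  exact le_of_mul_le_mul_left h (inv_pos.2 hn)

lemma wulff_aux_closed (φ : E2 → ℝ) : IsClosed (WulffShape φ) := by
  have : WulffShape φ = ⋂ y : E2, ⋂ _ : ‖y‖ = 1, {x : E2 | ⟪x, y⟫ ≤ φ y} := by
    ext x; simp [WulffShape]
  rw [this]
  exact isClosed_iInter fun y => isClosed_iInter fun _ =>
    isClosed_le (by fun_prop) continuous_const

lemma wulff_aux_dilate {s : Set E2} {m : E2} (v : E2) (hm : m ∈ interior s) :
    ∃ ε : ℝ, 0 < ε ∧ m + ε • v ∈ s := by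
  have hc : Filter.Tendsto (fun t : ℝ => m + t • v) (nhds 0) (nhds m) := by
    have : Continuous (fun t : ℝ => m + t • v) := by fun_prop
    simpa using this.tendsto 0
  have h1 := hc.eventually (mem_interior_iff_mem_nhds.1 hm)
  have h2 : ∀ᶠ t : ℝ in nhdsWithin 0 (Set.Ioi 0), m + t • v ∈ s := h1.filter_mono nhdsWithin_le_nhds
  obtain ⟨t, ht, ht'⟩ := (h2.and self_mem_nhdsWithin).exists
  exact ⟨t, ht', ht⟩

lemma wulff_aux_touch (φ : E2 → ℝ) (hC1 : ContDiffOn ℝ 1 φ {x : E2 | x ≠ 0}) {x : E2}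
    (hx : x ∈ WulffShape φ) (hx' : x ∉ interior (WulffShape φ)) :
    ∃ ν : E2, ‖ν‖ = 1 ∧ ⟪x, ν⟫ = φ ν := by
  by_contra! hne
  have hS : (Metric.sphere (0 : E2) 1).Nonempty := NormedSpace.sphere_nonempty.2 zero_le_one
  have hcont : ContinuousOn (fun y : E2 => φ y - ⟪x, y⟫) (Metric.sphere (0 : E2) 1) := by
    refine ContinuousOn.sub (hC1.continuousOn.mono ?_) (by fun_prop)
    intro y hy h0
    simp [h0] at hy
  obtain ⟨ν, hν, hmin⟩ := (isCompact_sphere (0 : E2) 1).exists_isMinOn hS hcont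
  have hν1 : ‖ν‖ = 1 := by simpa using hν
  have hδ : 0 < φ ν - ⟪x, ν⟫ := sub_pos.2 (lt_of_le_of_ne (hx ν hν1) (hne ν hν1))
  refine hx' (mem_interior_iff_mem_nhds.2 (Filter.mem_of_superset (Metric.ball_mem_nhds x hδ) ?_))
  intro z hz y hy
  have h1 : φ ν - ⟪x, ν⟫ ≤ φ y - ⟪x, y⟫ := hmin (by simpa using hy)
  have h2 : ⟪z - x, y⟫ ≤ ‖z - x‖ * ‖y‖ := real_inner_le_norm _ _
  rw [Metric.mem_ball, dist_eq_norm] at hz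
  rw [inner_sub_left, hy] at h2
  linarith

/-- If `φ : ℝ² → ℝ` is convex, positively 1-homogeneous, positive on nonzero vectors,
continuously differentiable away from `0`, and its unit sublevel set is strictly convex,
then the gradient map `F(ν) = ∇φ(ν)` restricted to the unit sphere is a continuous
bijection onto the frontier of the Wulff shape, and (the sphere being compact) induces
a homeomorphism of `S¹` onto `∂W_φ`. -/
theorem gradient_homeomorph_sphere_frontier_wulffShape
    (φ : EuclideanSpace ℝ (Fin 2) → ℝ)
    (hconv : ConvexOn ℝ Set.univ φ)
    (hhom : ∀ c : ℝ, 0 < c → ∀ x : EuclideanSpace ℝ (Fin 2), φ (c • x) = c * φ x)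
    (hpos : ∀ x : EuclideanSpace ℝ (Fin 2), x ≠ 0 → 0 < φ x)
    (hC1 : ContDiffOn ℝ 1 φ {x : EuclideanSpace ℝ (Fin 2) | x ≠ 0})
    (hstrict : StrictConvex ℝ {x : EuclideanSpace ℝ (Fin 2) | φ x ≤ 1}) :
    ContinuousOn (gradient φ) {ν : EuclideanSpace ℝ (Fin 2) | ‖ν‖ = 1} ∧
    Set.BijOn (gradient φ) {ν : EuclideanSpace ℝ (Fin 2) | ‖ν‖ = 1}
      (frontier (WulffShape φ)) ∧
    ∃ h : ({ν : EuclideanSpace ℝ (Fin 2) | ‖ν‖ = 1} : Set (EuclideanSpace ℝ (Fin 2))) ≃ₜ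
        (frontier (WulffShape φ) : Set (EuclideanSpace ℝ (Fin 2))),
      ∀ ν : ({ν : EuclideanSpace ℝ (Fin 2) | ‖ν‖ = 1} : Set (EuclideanSpace ℝ (Fin 2))),
        (h ν : EuclideanSpace ℝ (Fin 2)) = gradient φ (ν : EuclideanSpace ℝ (Fin 2)) := by
  have hne : ∀ {ν : EuclideanSpace ℝ (Fin 2)}, ‖ν‖ = 1 → ν ≠ 0 := by
    intro ν h h0
    simp [h0] at h
  have hcont : ContinuousOn (gradient φ) {ν : EuclideanSpace ℝ (Fin 2) | ‖ν‖ = 1} := by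
    have h := (hC1.continuousOn_fderiv_of_isOpen isOpen_ne le_rfl).mono
      (fun ν (h : ‖ν‖ = 1) => hne h)
    exact (InnerProductSpace.toDual ℝ (EuclideanSpace ℝ (Fin 2))).symm.continuous.comp_continuousOn h
  have hbij : Set.BijOn (gradient φ) {ν : EuclideanSpace ℝ (Fin 2) | ‖ν‖ = 1}
      (frontier (WulffShape φ)) := by
    rw [(wulff_aux_closed φ).frontier_eq]
    refine ⟨?_, ?_, ?_⟩
    · intro ν hν
      have hν : ‖ν‖ = 1 := hν
      refine ⟨fun y _ => wulff_aux_le φ hconv hC1 hhom (hne hν) y, fun hi => ?_⟩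
      obtain ⟨ε, hε, h⟩ := wulff_aux_dilate ν hi
      have h1 := h ν hν
      rw [inner_add_left, wulff_aux_euler φ hC1 hhom (hne hν), real_inner_smul_left,
        real_inner_self_eq_norm_sq, hν] at h1
      linarith
    · intro ν hν μ hμ heq
      have hν : ‖ν‖ = 1 := hν
      have hμ : ‖μ‖ = 1 := hμ
      by_contra hνμ
      have pν := hpos ν (hne hν)
      have pμ := hpos μ (hne hμ)
      have eν := wulff_aux_euler φ hC1 hhom (hne hν)
      have eμ := wulff_aux_euler φ hC1 hhom (hne hμ)
      have hle := wulff_aux_le φ hconv hC1 hhom (hne hν)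
      rw [← heq] at eμ
      generalize gradient φ ν = x at *
      have ha : φ ((φ ν)⁻¹ • ν) ≤ 1 := by
        rw [hhom _ (inv_pos.2 pν), inv_mul_cancel₀ pν.ne']
      have hb : φ ((φ μ)⁻¹ • μ) ≤ 1 := by
        rw [hhom _ (inv_pos.2 pμ), inv_mul_cancel₀ pμ.ne']
      have hab : (φ ν)⁻¹ • ν ≠ (φ μ)⁻¹ • μ := by
        intro h
        have hn := congrArg norm h
        rw [norm_smul, norm_smul, hν, hμ, Real.norm_of_nonneg (inv_pos.2 pν).le,
          Real.norm_of_nonneg (inv_pos.2 pμ).le, mul_one, mul_one] at hn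
        rw [hn] at h
        exact hνμ (smul_right_injective _ (inv_pos.2 pμ).ne' h)
      have hm := hstrict ha hb hab (show (0 : ℝ) < 1 / 2 by norm_num)
        (show (0 : ℝ) < 1 / 2 by norm_num) (by norm_num)
      have hxm : ⟪x, (1 / 2 : ℝ) • (φ ν)⁻¹ • ν + (1 / 2 : ℝ) • (φ μ)⁻¹ • μ⟫ = 1 := by
        simp only [inner_add_right, real_inner_smul_right, eν, eμ]
        rw [inv_mul_cancel₀ pν.ne', inv_mul_cancel₀ pμ.ne']
        norm_num
      generalize (1 / 2 : ℝ) • (φ ν)⁻¹ • ν + (1 / 2 : ℝ) • (φ μ)⁻¹ • μ = m at *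
      obtain ⟨ε, hε, h⟩ := wulff_aux_dilate m hm
      have h : φ (m + ε • m) ≤ 1 := h
      have h2 := hle (m + ε • m)
      rw [inner_add_right, real_inner_smul_right, hxm] at h2
      linarith
    · rintro x ⟨hx, hx'⟩
      obtain ⟨ν, hν, he⟩ := wulff_aux_touch φ hC1 hx hx'
      refine ⟨ν, hν, ?_⟩
      have hd := (wulff_aux_diff φ hC1 (hne hν)).sub
        (InnerProductSpace.toDual ℝ (EuclideanSpace ℝ (Fin 2)) x).hasFDerivAt
      have hmin : IsLocalMin (φ - fun y => InnerProductSpace.toDual ℝ (EuclideanSpace ℝ (Fin 2)) x y) ν := by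
        refine Filter.Eventually.of_forall fun y => ?_
        have := wulff_aux_mem φ hhom hx y
        simp only [Pi.sub_apply, InnerProductSpace.toDual_apply_apply, he]
        linarith
      have h0 := hmin.hasFDerivAt_eq_zero hd
      exact (InnerProductSpace.toDual ℝ (EuclideanSpace ℝ (Fin 2))).injective (sub_eq_zero.1 h0)
  refine ⟨hcont, hbij, ?_⟩
  have : CompactSpace ({ν : EuclideanSpace ℝ (Fin 2) | ‖ν‖ = 1} : Set (EuclideanSpace ℝ (Fin 2))) := by
    rw [← isCompact_iff_compactSpace]
    have h : {ν : EuclideanSpace ℝ (Fin 2) | ‖ν‖ = 1} = Metric.sphere 0 1 := by ext; simp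
    rw [h]
    exact isCompact_sphere _ _
  have hce : Continuous (hbij.equiv (gradient φ)) :=
    hcont.domRestrict.subtype_mk _
  exact ⟨hce.homeoOfEquivCompactToT2, fun ν => rfl⟩
end

section
/- Let φ : ℝ² → ℝ be continuous, positively 1-homogeneous, and positive on S¹. Then a point x belongs to the topological frontier ∂W_φ of the Wulff shape if and only if x ∈ W_φ and there exists a unit vector ν ∈ S¹ with ⟪x, ν⟫ = φ(ν); i.e. the boundary points of W_φ are exactly those points of W_φ at which some defining inequality is an equality. -/
open scoped RealInnerProductSpace

/-- If `φ : ℝ² → ℝ` is continuous, positively 1-homogeneous and positive on the unit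
sphere, then a point lies on the frontier of the Wulff shape iff it belongs to `W_φ` and
some defining inequality holds with equality. -/
theorem mem_frontier_wulffShape_iff
    (φ : EuclideanSpace ℝ (Fin 2) → ℝ)
    (hcont : Continuous φ)
    (hhom : ∀ c : ℝ, 0 < c → ∀ x : EuclideanSpace ℝ (Fin 2), φ (c • x) = c * φ x)
    (hpos : ∀ y : EuclideanSpace ℝ (Fin 2), ‖y‖ = 1 → 0 < φ y) :
    ∀ x : EuclideanSpace ℝ (Fin 2),
      x ∈ frontier (WulffShape φ) ↔
        x ∈ WulffShape φ ∧ ∃ ν : EuclideanSpace ℝ (Fin 2), ‖ν‖ = 1 ∧ ⟪x, ν⟫ = φ ν := by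
  intro x
  have hcl : IsClosed (WulffShape φ) := by
    have : WulffShape φ = ⋂ (y : EuclideanSpace ℝ (Fin 2)) (_ : ‖y‖ = 1), {x | ⟪x, y⟫ ≤ φ y} := by
      ext z
      simp [WulffShape]
    rw [this]
    refine isClosed_iInter fun y => isClosed_iInter fun _ => ?_
    exact isClosed_le (by fun_prop) continuous_const
  rw [hcl.frontier_eq, Set.mem_diff]
  refine and_congr_right fun hx => ?_
  constructor
  · intro hni
    by_contra! hne
    apply hni
    have hc : IsCompact (Metric.sphere (0 : EuclideanSpace ℝ (Fin 2)) 1) := isCompact_sphere _ _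
    have hn : (Metric.sphere (0 : EuclideanSpace ℝ (Fin 2)) 1).Nonempty :=
      NormedSpace.sphere_nonempty.mpr zero_le_one
    have hf : Continuous fun y : EuclideanSpace ℝ (Fin 2) => φ y - ⟪x, y⟫ := by fun_prop
    obtain ⟨y₀, hy₀, hmin⟩ := hc.exists_isMinOn hn hf.continuousOn
    have hy₁ : ‖y₀‖ = 1 := by simpa using hy₀
    have hm : 0 < φ y₀ - ⟪x, y₀⟫ := sub_pos.mpr (lt_of_le_of_ne (hx y₀ hy₁) (hne y₀ hy₁))
    rw [mem_interior_iff_mem_nhds, Metric.mem_nhds_iff]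
    refine ⟨_, hm, fun z hz y hy => ?_⟩
    have h1 : φ y₀ - ⟪x, y₀⟫ ≤ φ y - ⟪x, y⟫ := hmin (by simpa using hy)
    have h2 : ⟪z - x, y⟫ ≤ ‖z - x‖ * ‖y‖ := real_inner_le_norm _ _
    rw [hy, mul_one, inner_sub_left] at h2
    rw [Metric.mem_ball, dist_eq_norm] at hz
    linarith
  · rintro ⟨ν, hν, he⟩ hi
    rw [mem_interior_iff_mem_nhds, Metric.mem_nhds_iff] at hi
    obtain ⟨ε, hε, hb⟩ := hi
    have hmem : x + (ε / 2) • ν ∈ WulffShape φ := by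
      apply hb
      rw [Metric.mem_ball, dist_eq_norm, add_sub_cancel_left, norm_smul, hν, Real.norm_eq_abs,
        abs_of_pos (by linarith)]
      linarith
    have h := hmem ν hν
    rw [inner_add_left, real_inner_smul_left, real_inner_self_eq_norm_sq, hν] at h
    linarith
end

section
/- Let φ : ℝ² → ℝ be continuous, positively 1-homogeneous, positive on nonzero vectors, and assume the sublevel set {x ∈ ℝ² : φ(x) ≤ 1} is strictly convex. Then for every point x in the topological frontier ∂W_φ of the Wulff shape there exists a unique unit vector ν ∈ S¹ such that ⟪x, ν⟫ = φ(ν); equivalently, the functional y ↦ ⟪x, y⟫ − φ(y) attains its maximum over S¹ (which equals 0) at a unique point. -/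
open scoped RealInnerProductSpace

/-- If `φ : ℝ² → ℝ` is continuous, positively 1-homogeneous, positive on nonzero vectors,
and its unit sublevel set `{φ ≤ 1}` is strictly convex, then every point of the frontier
of the Wulff shape saturates exactly one defining inequality: there is a unique unit
vector `ν` with `⟪x, ν⟫ = φ(ν)`. -/
theorem frontier_wulffShape_unique_contact_direction
    (φ : EuclideanSpace ℝ (Fin 2) → ℝ)
    (hcont : Continuous φ)
    (hhom : ∀ c : ℝ, 0 < c → ∀ x : EuclideanSpace ℝ (Fin 2), φ (c • x) = c * φ x)
    (hpos : ∀ x : EuclideanSpace ℝ (Fin 2), x ≠ 0 → 0 < φ x)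
    (hstrict : StrictConvex ℝ {x : EuclideanSpace ℝ (Fin 2) | φ x ≤ 1}) :
    ∀ x ∈ frontier (WulffShape φ),
      ∃! ν : EuclideanSpace ℝ (Fin 2), ‖ν‖ = 1 ∧ ⟪x, ν⟫ = φ ν := by
  intro x hx
  have hclosed : IsClosed (WulffShape φ) := by
    have : WulffShape φ = ⋂ y : EuclideanSpace ℝ (Fin 2), ⋂ _ : ‖y‖ = 1, {x | ⟪x, y⟫ ≤ φ y} := by
      ext z; simp [WulffShape]
    rw [this]
    refine isClosed_iInter fun y => isClosed_iInter fun _ => ?_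
    exact isClosed_le (by fun_prop) continuous_const
  rw [hclosed.frontier_eq] at hx
  obtain ⟨hxW, hxI⟩ := hx
  have hex : ∃ ν : EuclideanSpace ℝ (Fin 2), ‖ν‖ = 1 ∧ ⟪x, ν⟫ = φ ν := by
    by_contra hno
    push Not at hno
    apply hxI
    have hne : (Metric.sphere (0 : EuclideanSpace ℝ (Fin 2)) 1).Nonempty :=
      NormedSpace.sphere_nonempty.2 zero_le_one
    obtain ⟨y0, hy0, hmin⟩ := (isCompact_sphere (0 : EuclideanSpace ℝ (Fin 2)) 1).exists_isMinOn
      hne (f := fun y => φ y - ⟪x, y⟫) (by fun_prop)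
    have hy0n : ‖y0‖ = 1 := by simpa using hy0
    have hε : 0 < φ y0 - ⟪x, y0⟫ :=
      sub_pos.2 (lt_of_le_of_ne (hxW y0 hy0n) (hno y0 hy0n))
    rw [mem_interior_iff_mem_nhds]
    filter_upwards [Metric.ball_mem_nhds x hε] with z hz
    intro y hy
    have h1 : φ y0 - ⟪x, y0⟫ ≤ φ y - ⟪x, y⟫ := hmin (by simpa using hy)
    have h2 : ⟪z - x, y⟫ ≤ ‖z - x‖ * ‖y‖ := real_inner_le_norm _ _
    rw [hy, inner_sub_left, ← dist_eq_norm] at h2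
    rw [Metric.mem_ball] at hz
    linarith
  obtain ⟨ν, hν, hνe⟩ := hex
  refine ⟨ν, ⟨hν, hνe⟩, ?_⟩
  rintro μ ⟨hμ, hμe⟩
  by_contra hne
  have hall : ∀ y : EuclideanSpace ℝ (Fin 2), y ≠ 0 → ⟪x, y⟫ ≤ φ y := by
    intro y hy
    have hp : 0 < ‖y‖⁻¹ := inv_pos.2 (norm_pos_iff.2 hy)
    have h := hxW (‖y‖⁻¹ • y) (by
      rw [norm_smul, norm_inv, norm_norm]; exact inv_mul_cancel₀ (norm_ne_zero_iff.2 hy))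
    rw [hhom _ hp, inner_smul_right] at h
    exact le_of_mul_le_mul_left h hp
  have hν0 : 0 < φ ν := hpos ν (by rintro rfl; simp at hν)
  have hμ0 : 0 < φ μ := hpos μ (by rintro rfl; simp at hμ)
  have hpq : (φ μ)⁻¹ • μ ≠ (φ ν)⁻¹ • ν := by
    intro h
    have h' := congrArg norm h
    rw [norm_smul, norm_smul, hμ, hν, mul_one, mul_one, Real.norm_of_nonneg (by positivity),
      Real.norm_of_nonneg (by positivity)] at h'
    rw [h'] at h
    exact hne (smul_right_injective _ (inv_pos.2 hν0).ne' h)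
  have hm := hstrict (x := (φ μ)⁻¹ • μ) (y := (φ ν)⁻¹ • ν)
    (by simp [hhom _ (inv_pos.2 hμ0), hμ0.ne'])
    (by simp [hhom _ (inv_pos.2 hν0), hν0.ne']) hpq
    (a := 1/2) (b := 1/2) (by norm_num) (by norm_num) (by norm_num)
  set m := (1/2 : ℝ) • ((φ μ)⁻¹ • μ) + (1/2 : ℝ) • ((φ ν)⁻¹ • ν) with hmdef
  have hxm : ⟪x, m⟫ = 1 := by
    rw [hmdef]
    simp only [inner_add_right, inner_smul_right, hμe, hνe]
    field_simp
    norm_num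
  have hc : Filter.Tendsto (fun t : ℝ => t • m) (nhds 1) (nhds m) := by
    have : Continuous (fun t : ℝ => t • m) := by fun_prop
    simpa using this.tendsto 1
  have hev := (hc (mem_interior_iff_mem_nhds.1 hm))
  have hev' : ∀ᶠ t in nhdsWithin (1 : ℝ) (Set.Ioi 1), φ (t • m) ≤ 1 :=
    nhdsWithin_le_nhds hev
  obtain ⟨t, ht, ht1⟩ := (hev'.and self_mem_nhdsWithin).exists
  have ht1 : 1 < t := ht1
  have hm0 : t • m ≠ 0 := by
    intro h
    have : ⟪x, t • m⟫ = 0 := by rw [h, inner_zero_right]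
    rw [inner_smul_right, hxm] at this
    linarith
  have h3 := hall _ hm0
  rw [inner_smul_right, hxm] at h3
  linarith
end

section
/- Let φ and φ_k (k ∈ ℕ) be functions ℝ² → ℝ, each continuous, positively 1-homogeneous, and positive on the unit sphere S¹. If φ_k → φ uniformly on S¹ as k → ∞, then the associated Wulff shapes converge in the Hausdorff distance: hausdorffDist(W_{φ_k}, W_φ) → 0 as k → ∞. -/
open scoped RealInnerProductSpace

open Filter

theorem wulff_aux (f g : EuclideanSpace ℝ (Fin 2) → ℝ) (m R δ : ℝ) (hm : 0 < m) (hR : 0 < R)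
    (hδ : 0 ≤ δ) (hg : ∀ y : EuclideanSpace ℝ (Fin 2), ‖y‖ = 1 → m ≤ g y)
    (hf : ∀ y : EuclideanSpace ℝ (Fin 2), ‖y‖ = 1 → f y ≤ R)
    (hfg : ∀ y : EuclideanSpace ℝ (Fin 2), ‖y‖ = 1 → f y ≤ g y + δ) :
    ∀ x ∈ WulffShape f, ∃ z ∈ WulffShape g, dist x z ≤ δ * R / m := by
  intro x hx
  have hxR : ‖x‖ ≤ R := by
    rcases eq_or_ne x 0 with rfl | h0
    · simpa using hR.le
    have hn : 0 < ‖x‖ := norm_pos_iff.mpr h0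
    have hu : ‖(‖x‖⁻¹ • x)‖ = 1 := by
      rw [norm_smul, norm_inv, norm_norm, inv_mul_cancel₀ hn.ne']
    have h := (hx _ hu).trans (hf _ hu)
    rw [real_inner_smul_right, real_inner_self_eq_norm_sq] at h
    have e : ‖x‖⁻¹ * ‖x‖ ^ 2 = ‖x‖ := by field_simp
    rwa [e] at h
  have hmd : 0 < m + δ := by linarith
  refine ⟨(m / (m + δ)) • x, ?_, ?_⟩
  · intro y hy
    have h1 := (hx y hy).trans (hfg y hy)
    have h2 := hg y hy
    rw [real_inner_smul_left, div_mul_eq_mul_div, div_le_iff₀ hmd]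
    nlinarith [mul_le_mul_of_nonneg_left h1 hm.le, mul_le_mul_of_nonneg_left h2 hδ]
  · have e : x - (m / (m + δ)) • x = (δ / (m + δ)) • x := by
      have : δ / (m + δ) = 1 - m / (m + δ) := by field_simp; ring
      rw [this, sub_smul, one_smul]
    have hle : δ / (m + δ) ≤ δ / m := div_le_div_of_nonneg_left hδ hm (by linarith)
    have h0 : 0 ≤ δ / (m + δ) := by positivity
    rw [dist_eq_norm, e, norm_smul, Real.norm_of_nonneg h0, mul_div_right_comm]
    exact mul_le_mul hle hxR (norm_nonneg _) (by positivity)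

/-- If anisotropic densities `φ_k` (continuous, positively 1-homogeneous, positive on the
unit sphere) converge uniformly on the unit sphere to such a density `φ`, then the
associated Wulff shapes converge in the Hausdorff distance. -/
theorem wulffShape_hausdorff_convergence
    (φ : EuclideanSpace ℝ (Fin 2) → ℝ)
    (φk : ℕ → EuclideanSpace ℝ (Fin 2) → ℝ)
    (hcont : Continuous φ)
    (hhom : ∀ c : ℝ, 0 < c → ∀ x : EuclideanSpace ℝ (Fin 2), φ (c • x) = c * φ x)
    (hpos : ∀ y : EuclideanSpace ℝ (Fin 2), ‖y‖ = 1 → 0 < φ y)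
    (hcontk : ∀ k : ℕ, Continuous (φk k))
    (hhomk : ∀ k : ℕ, ∀ c : ℝ, 0 < c →
      ∀ x : EuclideanSpace ℝ (Fin 2), φk k (c • x) = c * φk k x)
    (hposk : ∀ k : ℕ, ∀ y : EuclideanSpace ℝ (Fin 2), ‖y‖ = 1 → 0 < φk k y)
    (hunif : TendstoUniformlyOn φk φ atTop {y : EuclideanSpace ℝ (Fin 2) | ‖y‖ = 1}) :
    Tendsto (fun k : ℕ => Metric.hausdorffDist (WulffShape (φk k)) (WulffShape φ))
      atTop (nhds 0) := by
  have hK : IsCompact {y : EuclideanSpace ℝ (Fin 2) | ‖y‖ = 1} := by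
    have := isCompact_sphere (0 : EuclideanSpace ℝ (Fin 2)) 1
    have e : {y : EuclideanSpace ℝ (Fin 2) | ‖y‖ = 1} = Metric.sphere 0 1 := by
      ext y
      simp
    rw [e]
    exact this
  have hne : {y : EuclideanSpace ℝ (Fin 2) | ‖y‖ = 1}.Nonempty :=
    ⟨EuclideanSpace.single 0 1, by simp⟩
  obtain ⟨a, ha, hmin⟩ := hK.exists_isMinOn hne hcont.continuousOn
  obtain ⟨b, hb, hmax⟩ := hK.exists_isMaxOn hne hcont.continuousOn
  have hm : 0 < φ a := hpos a ha
  have hM : 0 < φ b := hpos b hb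
  have hmin' : ∀ y : EuclideanSpace ℝ (Fin 2), ‖y‖ = 1 → φ a ≤ φ y := fun y hy => hmin hy
  have hmax' : ∀ y : EuclideanSpace ℝ (Fin 2), ‖y‖ = 1 → φ y ≤ φ b := fun y hy => hmax hy
  set m := φ a / 2 with hmdef
  set R := φ b + m with hRdef
  have hm2 : 0 < m := by positivity
  have hR : 0 < R := by positivity
  rw [Metric.tendsto_atTop]
  intro ε hε
  obtain ⟨δ, hδdef⟩ : ∃ δ, δ = min m (ε * m / (2 * R)) := ⟨_, rfl⟩
  have hδ : 0 < δ := by rw [hδdef]; exact lt_min hm2 (by positivity)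
  have hδm : δ ≤ m := by rw [hδdef]; exact min_le_left _ _
  have hδe : δ ≤ ε * m / (2 * R) := by rw [hδdef]; exact min_le_right _ _
  have hfin : δ * R / m ≤ ε / 2 := by
    rw [le_div_iff₀ (by positivity)] at hδe
    rw [div_le_iff₀ hm2]
    linarith
  obtain ⟨N, hN⟩ := eventually_atTop.1 (Metric.tendstoUniformlyOn_iff.1 hunif δ hδ)
  refine ⟨N, fun k hk => ?_⟩
  have hd : ∀ y : EuclideanSpace ℝ (Fin 2), ‖y‖ = 1 → |φ y - φk k y| < δ := by
    intro y hy
    have := hN k hk y hy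
    rwa [Real.dist_eq] at this
  have key : Metric.hausdorffDist (WulffShape (φk k)) (WulffShape φ) ≤ δ * R / m := by
    apply Metric.hausdorffDist_le_of_mem_dist (by positivity)
    · apply wulff_aux _ _ m R δ hm2 hR hδ.le
      · intro y hy; linarith [hmin' y hy]
      · intro y hy; linarith [hmax' y hy, (abs_lt.1 (hd y hy)).1]
      · intro y hy; linarith [(abs_lt.1 (hd y hy)).1]
    · apply wulff_aux _ _ m R δ hm2 hR hδ.le
      · intro y hy; linarith [hmin' y hy, (abs_lt.1 (hd y hy)).2]
      · intro y hy; linarith [hmax' y hy]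
      · intro y hy; linarith [(abs_lt.1 (hd y hy)).2]
  rw [Real.dist_eq, sub_zero, abs_of_nonneg Metric.hausdorffDist_nonneg]
  linarith
end
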